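/- arXiv:2201.01685 — 3 statements merged into one kernel-verified Lean document; each statement's English description precedes it below -/
import Mathlib

section
/- Let 𝒩 be a finite set of nodes, 𝒯 a finite set of time steps, and for each n ∈ 𝒩 a neighbor set ω_n ⊆ 𝒩 with m ∈ ω_n ⇔ n ∈ ω_m and n ∉ ω_n. Let real numbers p^{bilateral}_{n,m,t}, z^{bilateral}_{n,m,t}, p^{pool}_{n,t}, z^{pool}_{n,t}, e^{CO2}_n, CAP and prices λ^{bilateral}_{n,m,t}, λ^{grid}_{n,m,t}, λ^{pool}_{n,t}, λ^{CO2} be given. Assume the clearing conditions p^{bilateral}_{n,m,t} = −p^{bilateral}_{m,n,t}, p^{bilateral}_{n,m,t} = z^{bilateral}_{n,m,t}, p^{pool}_{n,t} = z^{pool}_{n,t}, Σ_n e^{CO2}_n = CAP, and assume the bilateral prices are symmetric: λ^{bilateral}_{n,m,t} = λ^{bilateral}_{m,n,t}. Then (i) the total bilateral energy payments vanish: Σ_{t,n,m∈ω_n} λ^{bilateral}_{n,m,t} p^{bilateral}_{n,m,t} = 0; and (ii) the nodes' total trading cost equals the TSO's congestion revenue plus the carbon revenue: Σ_n [ Σ_{t,m∈ω_n}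 (λ^{bilateral}_{n,m,t} + λ^{grid}_{n,m,t}) p^{bilateral}_{n,m,t} + Σ_t λ^{pool}_{n,t} p^{pool}_{n,t} + λ^{CO2} e^{CO2}_n ] = Σ_{t,n} ( Σ_{m∈ω_n} λ^{grid}_{n,m,t} z^{bilateral}_{n,m,t} + λ^{pool}_{n,t} z^{pool}_{n,t} ) + λ^{CO2}·CAP. -/
/-! Symmetric prices make the payments of the two partners of a bilateral trade opposite. Since the
neighbour relation is symmetric and irreflexive, the ordered pairs of partners split into swapped
pairs `(n, m)`, `(m, n)`, whose payments cancel. What is left of the nodes' cost is, term by term,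
the TSO's revenue and the carbon revenue once the markets clear. -/

section

variable {N : Type*} [Fintype N] (ω : N → Finset N)

lemma sum_neighbors_eq_zero_of_add_swap_eq_zero {M : Type*} [AddCommMonoid M]
    (hsym : ∀ n m, m ∈ ω n ↔ n ∈ ω m) (hirr : ∀ n, n ∉ ω n) (f : N → N → M)
    (hf : ∀ n, ∀ m ∈ ω n, f n m + f m n = 0) :
    ∑ n, ∑ m ∈ ω n, f n m = 0 := by
  have mem_iff (x : Σ _ : N, N) : x ∈ Finset.univ.sigma ω ↔ x.2 ∈ ω x.1 := by
    simp only [Finset.mem_sigma, Finset.mem_univ, true_and]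
  have swap_ne (x : Σ _ : N, N) (hx : x.2 ∈ ω x.1) : (⟨x.2, x.1⟩ : Σ _ : N, N) ≠ x := by
    intro h
    have hfst : x.2 = x.1 := congrArg Sigma.fst h
    exact hirr x.1 (hfst ▸ hx)
  rw [Finset.sum_sigma']
  exact Finset.sum_involution (fun x _ => ⟨x.2, x.1⟩)
    (fun x hx => hf x.1 x.2 ((mem_iff x).1 hx))
    (fun x hx _ => swap_ne x ((mem_iff x).1 hx))
    (fun x hx => (mem_iff _).2 ((hsym x.1 x.2).1 ((mem_iff x).1 hx)))
    (fun _ _ => rfl)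

lemma sum_neighbors_mul_eq_zero_of_symm_of_antisymm {R : Type*} [NonUnitalNonAssocRing R]
    (hsym : ∀ n m, m ∈ ω n ↔ n ∈ ω m) (hirr : ∀ n, n ∉ ω n) (price trade : N → N → R)
    (hprice : ∀ n, ∀ m ∈ ω n, price n m = price m n)
    (htrade : ∀ n, ∀ m ∈ ω n, trade n m = -trade m n) :
    ∑ n, ∑ m ∈ ω n, price n m * trade n m = 0 :=
  sum_neighbors_eq_zero_of_add_swap_eq_zero ω hsym hirr _ fun n m hm => by
    rw [hprice n m hm, htrade n m hm, mul_neg, neg_add_cancel]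

lemma sum_trading_cost_eq_bilateral_add_congestion_add_carbon {T R : Type*} [Fintype T]
    [NonUnitalNonAssocSemiring R]
    (pb : N → N → T → R) (pp : N → T → R) (e : N → R)
    (lb lg : N → N → T → R) (lp : N → T → R) (lc : R) :
    ∑ n, ((∑ t, ∑ m ∈ ω n, (lb n m t + lg n m t) * pb n m t)
        + (∑ t, lp n t * pp n t) + lc * e n)
      = (∑ t, ∑ n, ∑ m ∈ ω n, lb n m t * pb n m t)
        + (∑ t, ∑ n, ((∑ m ∈ ω n, lg n m t * pb n m t) + lp n t * pp n t))
        + lc * ∑ n, e n := by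
  rw [Finset.sum_comm (f := fun t n => ∑ m ∈ ω n, lb n m t * pb n m t),
    Finset.sum_comm (f := fun t n => (∑ m ∈ ω n, lg n m t * pb n m t) + lp n t * pp n t)]
  simp only [add_mul, Finset.sum_add_distrib, Finset.mul_sum, add_assoc]

end

theorem payment_balance_identity_general
    {N T R : Type*} [Fintype N] [Fintype T] [NonUnitalNonAssocRing R]
    (ω : N → Finset N)
    (hsym : ∀ n m, m ∈ ω n ↔ n ∈ ω m) (hirr : ∀ n, n ∉ ω n)
    (pb zb : N → N → T → R) (pp zp : N → T → R) (e : N → R) (CAP : R)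
    (lb lg : N → N → T → R) (lp : N → T → R) (lc : R)
    (hrec : ∀ n, ∀ m ∈ ω n, ∀ t, pb n m t = -pb m n t)
    (hzb : ∀ n, ∀ m ∈ ω n, ∀ t, pb n m t = zb n m t)
    (hzp : ∀ n t, pp n t = zp n t)
    (hcap : (∑ n, e n) = CAP)
    (hlbsym : ∀ n, ∀ m ∈ ω n, ∀ t, lb n m t = lb m n t) :
    (∑ t, ∑ n, ∑ m ∈ ω n, lb n m t * pb n m t = 0) ∧
    (∑ n, ((∑ t, ∑ m ∈ ω n, (lb n m t + lg n m t) * pb n m t)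
        + (∑ t, lp n t * pp n t) + lc * e n)
      = (∑ t, ∑ n, ((∑ m ∈ ω n, lg n m t * zb n m t) + lp n t * zp n t)) + lc * CAP) := by
  have hpay : ∑ t, ∑ n, ∑ m ∈ ω n, lb n m t * pb n m t = 0 :=
    Finset.sum_eq_zero fun t _ =>
      sum_neighbors_mul_eq_zero_of_symm_of_antisymm ω hsym hirr (lb · · t) (pb · · t)
        (fun n m hm => hlbsym n m hm t) (fun n m hm => hrec n m hm t)
  have hcongestion (n : N) (t : T) :
      (∑ m ∈ ω n, lg n m t * pb n m t) + lp n t * pp n t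
        = (∑ m ∈ ω n, lg n m t * zb n m t) + lp n t * zp n t := by
    rw [hzp n t, Finset.sum_congr rfl fun m hm => by rw [hzb n m hm t]]
  refine ⟨hpay, ?_⟩
  rw [sum_trading_cost_eq_bilateral_add_congestion_add_carbon, hpay, zero_add, hcap]
  simp only [hcongestion]

/-- **Payment-balance identity of the mixed bilateral and pool markets.**
Under the market-clearing conditions (reciprocity `pb n m t = - pb m n t`, trade balances
`pb = zb` and `pp = zp`, carbon cap `∑ n, e n = CAP`) and symmetric bilateral prices
`lb n m t = lb m n t`:
(i) the total bilateral energy payments vanish, and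
(ii) the nodes' total trading cost equals the TSO's congestion revenue plus the carbon
revenue `lc * CAP`. -/
theorem payment_balance_identity
    {N T : Type*} [Fintype N] [Fintype T] (ω : N → Finset N)
    (hsym : ∀ n m, m ∈ ω n ↔ n ∈ ω m) (hirr : ∀ n, n ∉ ω n)
    (pb zb : N → N → T → ℝ) (pp zp : N → T → ℝ) (e : N → ℝ) (CAP : ℝ)
    (lb lg : N → N → T → ℝ) (lp : N → T → ℝ) (lc : ℝ)
    (hrec : ∀ n, ∀ m ∈ ω n, ∀ t, pb n m t = - pb m n t)
    (hzb : ∀ n, ∀ m ∈ ω n, ∀ t, pb n m t = zb n m t)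
    (hzp : ∀ n t, pp n t = zp n t)
    (hcap : (∑ n, e n) = CAP)
    (hlbsym : ∀ n m t, lb n m t = lb m n t) :
    (∑ t, ∑ n, ∑ m ∈ ω n, lb n m t * pb n m t = 0) ∧
    (∑ n, ((∑ t, ∑ m ∈ ω n, (lb n m t + lg n m t) * pb n m t)
        + (∑ t, lp n t * pp n t) + lc * e n)
      = (∑ t, ∑ n, ((∑ m ∈ ω n, lg n m t * zb n m t) + lp n t * zp n t)) + lc * CAP) := by
  exact payment_balance_identity_general ω hsym hirr pb zb pp zp e CAP lb lg lp lc
    hrec hzb hzp hcap fun n m _ t => hlbsym n m t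
end

section
/- Consider the paper's full mixed-market model (see context). Suppose the combined primal point (node variables (k, k^{storage}, p, p^{bilateral}, p^{pool}, soc, p^{in}, p^{out}, e^{CO2})_{n∈𝒩}, TSO variables (k_l, z^{bilateral}, z^{pool}, f)) is feasible for the centralized problem (5), and that there exist multipliers λ^{bilateral}_{n,m,t}, λ^{grid}_{n,m,t}, λ^{pool}_{n,t}, λ^{CO2} ∈ ℝ such that this point minimizes the partial Lagrangian — the centralized objective plus Σ_{t,n,m∈ω_n} λ^{bilateral}_{n,m,t}(p^{bilateral}_{n,m,t} + p^{bilateral}_{m,n,t}) + Σ_{t,n,m∈ω_n} λ^{grid}_{n,m,t}(p^{bilateral}_{n,m,t} − z^{bilateral}_{n,m,t}) + Σ_{t,n} λ^{pool}_{n,t}(p^{pool}_{n,t} − z^{pool}_{n,t}) + λ^{CO2}(Σ_n e^{CO2}_n − CAP) — over the product of the nodes' feasible sets X_n and the TSO's feasible set Y (i.e., with the clearing constraints relaxed). Define the symmetric equilibrium bilateral prices λ̃^{bilateral}_{n,m,t} := λ^{bilateral}_{n,m,t} + λ^{bilateral}_{m,n,t}. Then the point is a long-term market equilibrium: (i) for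 every node n, its variables minimize node n's cost F_n + Σ_{t,m∈ω_n}(λ̃^{bilateral}_{n,m,t} + λ^{grid}_{n,m,t}) p^{bilateral}_{n,m,t} + Σ_t λ^{pool}_{n,t} p^{pool}_{n,t} + λ^{CO2} e^{CO2}_n over X_n; (ii) the TSO variables minimize F_{TSO} − Σ_{t,n}(Σ_{m∈ω_n} λ^{grid}_{n,m,t} z^{bilateral}_{n,m,t} + λ^{pool}_{n,t} z^{pool}_{n,t}) over Y; and (iii) all clearing constraints hold, so both market operators' (linear, unconstrained) objectives are identically zero and any prices are optimal for them. -/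
/-!
Symmetry of the neighbor relation lets the two ends of every bilateral trade exchange roles, which
turns `λ n m * (p n m + p m n)` into `(λ n m + λ m n) * p n m`. After this exchange every term of
the partial Lagrangian involves the variables of one agent only: up to a constant it is the sum of
the nodes' total costs at the symmetrized bilateral prices and of the TSO's total cost. A minimizer
of a sum of functions of separate variables over a product set minimizes each summand.
-/

/-- Decision variables of a node: generation capacities `kG`, storage conversion
capacities `kSc`, storage (energy) capacities `kstor`, productions `p`, bilateral trades
`pb` (towards each neighbor), pool trades `pp`, state of charge `soc`, charging `pin`,
discharging `pout`, and carbon permits `e`. -/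
structure NodeVars (N G S T : Type*) where
  kG : G → ℝ
  kSc : S → ℝ
  kstor : S → ℝ
  p : G → T → ℝ
  pb : N → T → ℝ
  pp : T → ℝ
  soc : S → T → ℝ
  pin : S → T → ℝ
  pout : S → T → ℝ
  e : ℝ

/-- Decision variables of the TSO: line capacities `kl`, bilateral arbitrage trades `zb`,
pool arbitrage trades `zp`, and line flows `flow`. -/
structure TSOVars (N L T : Type*) where
  kl : L → ℝ
  zb : N → N → T → ℝ
  zp : N → T → ℝ
  flow : L → T → ℝ

/-- All data of the paper's mixed bilateral/pool market model: communication graph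
`omega`, fossil technologies `R`, time predecessor `prev`, annualized costs
`CG i = C_i/A_i` (generation), `CSc i = C_i/A_i` (storage conversion), `CS i = CS_i/A_i`
(storage), variable costs `B`, line costs `CL l = Δ_l C_l/A_l`, externalities
`Ecap`, `Eprod`, product differentiation `Ebil`, demands `D`, availabilities `Eav`,
existing capacities `K`, `KSc`, `Kstor`, `Kl`, storage efficiencies `Hin`, `Hout`,
emission factors `W`, bilateral shares `Phi`, PTDF matrix, and carbon cap `CAP`. -/
structure MarketData (N G S L T : Type*) where
  omega : N → Finset N
  R : Finset G
  prev : T → T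
  CG : G → ℝ
  CSc : S → ℝ
  CS : S → ℝ
  B : G → ℝ
  CL : L → ℝ
  Ecap : G → N → ℝ
  Eprod : G → N → ℝ
  Ebil : N → N → ℝ
  D : N → T → ℝ
  Eav : G → N → T → ℝ
  K : G → N → ℝ
  KSc : S → N → ℝ
  Kstor : S → N → ℝ
  Kl : L → ℝ
  Hin : S → ℝ
  Hout : S → ℝ
  W : G → ℝ
  Phi : N → ℝ
  PTDF : L → N → ℝ
  CAP : ℝ

variable {N G S L T : Type*} [Fintype N] [Fintype G] [Fintype S] [Fintype L] [Fintype T]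

/-- Node `n`'s feasible set `X_n`: bilateral and pool energy balances, generation limits,
storage state-of-charge recursion and limits, charging/discharging limits, and emission
accounting. -/
def NodeFeasible (M : MarketData N G S L T) (n : N) (x : NodeVars N G S T) : Prop :=
  (∀ t, M.Phi n * ((∑ i, x.p i t) - M.D n t + (∑ i, x.pout i t) - (∑ i, x.pin i t))
      = ∑ m ∈ M.omega n, x.pb m t) ∧
  (∀ t, (1 - M.Phi n) * ((∑ i, x.p i t) - M.D n t + (∑ i, x.pout i t) - (∑ i, x.pin i t))
      = x.pp t) ∧
  (∀ i t, 0 ≤ x.p i t ∧ x.p i t ≤ M.Eav i n t * (x.kG i + M.K i n)) ∧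
  (∀ i t, x.soc i t = x.soc i (M.prev t) + M.Hin i * x.pin i t - x.pout i t / M.Hout i) ∧
  (∀ i t, 0 ≤ x.soc i t ∧ x.soc i t ≤ x.kstor i + M.Kstor i n) ∧
  (∀ i t, 0 ≤ x.pout i t ∧ x.pout i t ≤ x.kSc i + M.KSc i n) ∧
  (∀ i t, 0 ≤ x.pin i t ∧ x.pin i t ≤ x.kSc i + M.KSc i n) ∧
  (x.e = ∑ t, ∑ i ∈ M.R, M.W i * x.p i t)

/-- Node `n`'s own (non-trading) cost `F_n`: annualized investment costs, variable costs,
capacity and production externality costs, and product-differentiation costs. -/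
def Fnode (M : MarketData N G S L T) (n : N) (x : NodeVars N G S T) : ℝ :=
  (∑ i, M.CG i * x.kG i) + (∑ i, M.CSc i * x.kSc i) + (∑ i, M.CS i * x.kstor i)
  + (∑ t, ∑ i, M.B i * x.p i t)
  + (∑ i, M.Ecap i n * x.kG i) + (∑ t, ∑ i, M.Eprod i n * x.p i t)
  + (∑ t, ∑ m ∈ M.omega n, M.Ebil n m * |x.pb m t|)

/-- The TSO's feasible set `Y`: PTDF flow definition and line thermal limits. -/
def TSOFeasible (M : MarketData N G S L T) (y : TSOVars N L T) : Prop :=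
  (∀ l t, y.flow l t = ∑ n, M.PTDF l n * ((∑ m ∈ M.omega n, y.zb n m t) + y.zp n t)) ∧
  (∀ l t, -(y.kl l + M.Kl l) ≤ y.flow l t ∧ y.flow l t ≤ y.kl l + M.Kl l)

/-- The TSO's own cost `F_TSO`: annualized line investment costs. -/
def Ftso (M : MarketData N G S L T) (y : TSOVars N L T) : ℝ := ∑ l, M.CL l * y.kl l

/-- The market-clearing constraints: reciprocity of bilateral trades, bilateral and pool
trade balances with the TSO, and the carbon cap. -/
def Clearing (M : MarketData N G S L T) (x : N → NodeVars N G S T)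
    (y : TSOVars N L T) : Prop :=
  (∀ n, ∀ m ∈ M.omega n, ∀ t, (x n).pb m t = - (x m).pb n t) ∧
  (∀ n, ∀ m ∈ M.omega n, ∀ t, (x n).pb m t = y.zb n m t) ∧
  (∀ n t, (x n).pp t = y.zp n t) ∧
  ((∑ n, (x n).e) = M.CAP)

/-- Node `n`'s total cost at prices (`ltil` = symmetric bilateral prices, `lg` grid prices,
`lp` pool prices, `lc` carbon price): own cost plus trading payments. -/
def NodeCost (M : MarketData N G S L T) (n : N) (ltil lg : N → N → T → ℝ)
    (lp : N → T → ℝ) (lc : ℝ) (x : NodeVars N G S T) : ℝ :=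
  Fnode M n x + (∑ t, ∑ m ∈ M.omega n, (ltil n m t + lg n m t) * x.pb m t)
  + (∑ t, lp n t * x.pp t) + lc * x.e

/-- The TSO's total cost: own cost minus congestion revenue. -/
def TSOCost (M : MarketData N G S L T) (lg : N → N → T → ℝ) (lp : N → T → ℝ)
    (y : TSOVars N L T) : ℝ :=
  Ftso M y - ∑ t, ∑ n, ((∑ m ∈ M.omega n, lg n m t * y.zb n m t) + lp n t * y.zp n t)

/-- The partial Lagrangian of the centralized problem (5): the centralized objective plus
the price-weighted clearing-constraint terms, with the clearing constraints relaxed. -/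
def Lagr (M : MarketData N G S L T) (lb lg : N → N → T → ℝ) (lp : N → T → ℝ) (lc : ℝ)
    (x : N → NodeVars N G S T) (y : TSOVars N L T) : ℝ :=
  (∑ n, Fnode M n (x n)) + Ftso M y
  + (∑ t, ∑ n, ∑ m ∈ M.omega n, lb n m t * ((x n).pb m t + (x m).pb n t))
  + (∑ t, ∑ n, ∑ m ∈ M.omega n, lg n m t * ((x n).pb m t - y.zb n m t))
  + (∑ t, ∑ n, lp n t * ((x n).pp t - y.zp n t))
  + lc * ((∑ n, (x n).e) - M.CAP)

section SeparableMinimization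

variable {α β R : Type*} [AddCommMonoid R] [Preorder R]

lemma isMinOn_fst_of_isMinOn_add_prod [AddRightReflectLE R] {f : α → R} {g : β → R} {s : Set α}
    {t : Set β} {a : α} {b : β} (hb : b ∈ t)
    (h : IsMinOn (fun z : α × β => f z.1 + g z.2) (s ×ˢ t) (a, b)) : IsMinOn f s a :=
  fun x hx => le_of_add_le_add_right (h (Set.mk_mem_prod hx hb) : f a + g b ≤ f x + g b)

lemma isMinOn_snd_of_isMinOn_add_prod [AddLeftReflectLE R] {f : α → R} {g : β → R} {s : Set α}
    {t : Set β} {a : α} {b : β} (ha : a ∈ s)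
    (h : IsMinOn (fun z : α × β => f z.1 + g z.2) (s ×ˢ t) (a, b)) : IsMinOn g t b :=
  fun y hy => le_of_add_le_add_left (h (Set.mk_mem_prod ha hy) : f a + g b ≤ f a + g y)

lemma isMinOn_apply_of_isMinOn_sum_pi [AddRightReflectLE R] {ι : Type*} [Fintype ι]
    {γ : ι → Type*} {f : ∀ i, γ i → R} {s : ∀ i, Set (γ i)} {a : ∀ i, γ i}
    (ha : a ∈ Set.univ.pi s) (h : IsMinOn (fun x => ∑ i, f i (x i)) (Set.univ.pi s) a) (i : ι) :
    IsMinOn (f i) (s i) (a i) := by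
  classical
  intro x hx
  have sum_update (z : γ i) : ∑ j, f j (Function.update a i z j)
      = f i z + ∑ j ∈ Finset.univ \ {i}, f j (a j) := by
    simp only [Function.apply_update f, Finset.sum_update_of_mem (Finset.mem_univ i)]
  have hdev : ∑ j, f j (Function.update a i (a i) j) ≤ ∑ j, f j (Function.update a i x j) := by
    rw [Function.update_eq_self]
    exact h ((Set.update_mem_pi_iff_of_mem ha).2 fun _ => hx)
  rw [sum_update, sum_update] at hdev
  exact le_of_add_le_add_right hdev

end SeparableMinimization

section SymmetricNeighbors

variable {ι R : Type*} [Fintype ι] {ω : ι → Finset ι}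

lemma sum_sum_neighbors_comm [AddCommMonoid R] (hω : ∀ i j, j ∈ ω i ↔ i ∈ ω j)
    (f : ι → ι → R) : ∑ i, ∑ j ∈ ω i, f i j = ∑ i, ∑ j ∈ ω i, f j i :=
  Finset.sum_comm' fun i j => by
    simpa only [Finset.mem_univ, true_and, and_true] using hω i j

lemma sum_neighbors_mul_add_swap [NonUnitalNonAssocSemiring R]
    (hω : ∀ i j, j ∈ ω i ↔ i ∈ ω j) (price trade : ι → ι → R) :
    ∑ i, ∑ j ∈ ω i, price i j * (trade i j + trade j i)
      = ∑ i, ∑ j ∈ ω i, (price i j + price j i) * trade i j := by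
  simp only [mul_add, add_mul, Finset.sum_add_distrib]
  rw [sum_sum_neighbors_comm hω fun i j => price i j * trade j i]

end SymmetricNeighbors

/-- The symmetric equilibrium bilateral price `λ̃ n m t = λ n m t + λ m n t` built from the
multipliers `λ` of the reciprocity constraints, which enter once for each ordered pair of
neighbors. -/
def symmetricPrice {ι τ : Type*} (lb : ι → ι → τ → ℝ) : ι → ι → τ → ℝ :=
  fun n m t => lb n m t + lb m n t

/-- Long-term market equilibrium at bilateral, grid, pool and carbon prices `ltil`, `lg`, `lp`,
`lc`: every agent is optimal given the prices, and the markets clear. The feasible sets `X n` of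
the nodes and `Y` of the TSO are parameters; in the paper's model they are given by `NodeFeasible`
and `TSOFeasible`. -/
structure IsMarketEquilibrium (M : MarketData N G S L T) (X : N → Set (NodeVars N G S T))
    (Y : Set (TSOVars N L T)) (ltil lg : N → N → T → ℝ) (lp : N → T → ℝ) (lc : ℝ)
    (x : N → NodeVars N G S T) (y : TSOVars N L T) : Prop where
  isMinOn_nodeCost : ∀ n, IsMinOn (NodeCost M n ltil lg lp lc) (X n) (x n)
  isMinOn_tsoCost : IsMinOn (TSOCost M lg lp) Y y
  clearing : Clearing M x y

section Market

variable {M : MarketData N G S L T} {x : N → NodeVars N G S T} {y : TSOVars N L T}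

omit [Fintype L] in
lemma sum_nodeCost (ltil lg : N → N → T → ℝ) (lp : N → T → ℝ) (lc : ℝ) :
    ∑ n, NodeCost M n ltil lg lp lc (x n) = ∑ n, Fnode M n (x n)
      + ∑ t, ∑ n, ∑ m ∈ M.omega n, (ltil n m t + lg n m t) * (x n).pb m t
      + ∑ t, ∑ n, lp n t * (x n).pp t + lc * ∑ n, (x n).e := by
  simp only [NodeCost, Finset.sum_add_distrib, Finset.mul_sum]
  rw [Finset.sum_comm (f := fun n t => ∑ m ∈ M.omega n, (ltil n m t + lg n m t) * (x n).pb m t),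
    Finset.sum_comm (f := fun n t => lp n t * (x n).pp t)]

lemma lagr_eq_sum_nodeCost_add_tsoCost (hsym : ∀ n m, m ∈ M.omega n ↔ n ∈ M.omega m)
    (lb lg : N → N → T → ℝ) (lp : N → T → ℝ) (lc : ℝ) :
    Lagr M lb lg lp lc x y = ∑ n, NodeCost M n (symmetricPrice lb) lg lp lc (x n)
      + TSOCost M lg lp y - lc * M.CAP := by
  have hbilateral (t : T) :
      ∑ n, ∑ m ∈ M.omega n, lb n m t * ((x n).pb m t + (x m).pb n t)
        = ∑ n, ∑ m ∈ M.omega n, symmetricPrice lb n m t * (x n).pb m t :=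
    sum_neighbors_mul_add_swap hsym (fun n m => lb n m t) fun n m => (x n).pb m t
  simp only [Lagr, hbilateral, sum_nodeCost, TSOCost, add_mul, mul_sub, Finset.sum_add_distrib,
    Finset.sum_sub_distrib]
  ring

omit [Fintype G] [Fintype S] [Fintype L] in
lemma Clearing.marketOperator_objective_eq_zero (h : Clearing M x y) (lb lg : N → N → T → ℝ)
    (lp : N → T → ℝ) :
    (∑ t, ∑ n, ∑ m ∈ M.omega n, lb n m t * ((x n).pb m t + (x m).pb n t))
      + (∑ t, ∑ n, ∑ m ∈ M.omega n, lg n m t * ((x n).pb m t - y.zb n m t))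
      + (∑ t, ∑ n, lp n t * ((x n).pp t - y.zp n t)) = 0 := by
  obtain ⟨hreciprocal, hgrid, hpool, -⟩ := h
  have hbilateral_zero (t : T) (n : N) :
      ∑ m ∈ M.omega n, lb n m t * ((x n).pb m t + (x m).pb n t) = 0 :=
    Finset.sum_eq_zero fun m hm => by rw [hreciprocal n m hm t, neg_add_cancel, mul_zero]
  have hgrid_zero (t : T) (n : N) :
      ∑ m ∈ M.omega n, lg n m t * ((x n).pb m t - y.zb n m t) = 0 :=
    Finset.sum_eq_zero fun m hm => by rw [hgrid n m hm t, sub_self, mul_zero]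
  simp only [hbilateral_zero, hgrid_zero, hpool, sub_self, mul_zero, Finset.sum_const_zero,
    add_zero]

omit [Fintype G] [Fintype S] [Fintype L] [Fintype T] in
lemma Clearing.carbonOperator_objective_eq_zero (h : Clearing M x y) (lc : ℝ) :
    lc * ((∑ n, (x n).e) - M.CAP) = 0 := by
  rw [h.2.2.2, sub_self, mul_zero]

theorem lagrangian_minimizer_is_market_equilibrium_general
    (hsym : ∀ n m, m ∈ M.omega n ↔ n ∈ M.omega m) {X : N → Set (NodeVars N G S T)}
    {Y : Set (TSOVars N L T)} {lb lg : N → N → T → ℝ} {lp : N → T → ℝ} {lc : ℝ}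
    (hx : x ∈ Set.univ.pi X) (hy : y ∈ Y) (hclear : Clearing M x y)
    (hmin : IsMinOn (fun z : (N → NodeVars N G S T) × TSOVars N L T =>
      Lagr M lb lg lp lc z.1 z.2) (Set.univ.pi X ×ˢ Y) (x, y)) :
    IsMarketEquilibrium M X Y (symmetricPrice lb) lg lp lc x y := by
  have hseparated : IsMinOn (fun z : (N → NodeVars N G S T) × TSOVars N L T =>
      ∑ n, NodeCost M n (symmetricPrice lb) lg lp lc (z.1 n) + TSOCost M lg lp z.2)
      (Set.univ.pi X ×ˢ Y) (x, y) := by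
    simpa only [isMinOn_iff, lagr_eq_sum_nodeCost_add_tsoCost hsym, sub_le_sub_iff_right]
      using hmin
  have hnodes : IsMinOn (fun x : N → NodeVars N G S T =>
      ∑ n, NodeCost M n (symmetricPrice lb) lg lp lc (x n)) (Set.univ.pi X) x :=
    isMinOn_fst_of_isMinOn_add_prod hy hseparated
  have htso : IsMinOn (TSOCost M lg lp) Y y :=
    isMinOn_snd_of_isMinOn_add_prod (f := fun x : N → NodeVars N G S T =>
      ∑ n, NodeCost M n (symmetricPrice lb) lg lp lc (x n)) hx hseparated
  exact ⟨isMinOn_apply_of_isMinOn_sum_pi hx hnodes, htso, hclear⟩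

end Market

/-- **A centrally feasible minimizer of the partial Lagrangian is a long-term market
equilibrium.** If the combined primal point is feasible for the centralized problem (5)
and minimizes the partial Lagrangian over the product of the nodes' feasible sets and the
TSO's feasible set, then, with the symmetric equilibrium bilateral prices
`λ̃ n m t = lb n m t + lb m n t`: (i) every node's variables minimize its total cost over
`X_n`; (ii) the TSO's variables minimize its cost minus congestion revenue over `Y`; and
(iii) all clearing constraints hold, so both market operators' (linear, unconstrained)
objectives are identically zero and any prices are optimal for them. -/
theorem lagrangian_minimizer_is_market_equilibrium
    (M : MarketData N G S L T)
    (hsym : ∀ n m, m ∈ M.omega n ↔ n ∈ M.omega m) (hirr : ∀ n, n ∉ M.omega n)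
    (hEbil : ∀ n m, 0 ≤ M.Ebil n m) (hEav : ∀ i n t, 0 ≤ M.Eav i n t)
    (hK : ∀ i n, 0 ≤ M.K i n) (hKSc : ∀ i n, 0 ≤ M.KSc i n)
    (hKstor : ∀ i n, 0 ≤ M.Kstor i n) (hKl : ∀ l, 0 ≤ M.Kl l)
    (hHin : ∀ i, 0 < M.Hin i) (hHout : ∀ i, 0 < M.Hout i) (hW : ∀ i, 0 ≤ M.W i)
    (hPhi : ∀ n, 0 ≤ M.Phi n ∧ M.Phi n ≤ 1)
    (lb lg : N → N → T → ℝ) (lp : N → T → ℝ) (lc : ℝ)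
    (x : N → NodeVars N G S T) (y : TSOVars N L T)
    (hxfeas : ∀ n, NodeFeasible M n (x n)) (hyfeas : TSOFeasible M y)
    (hclear : Clearing M x y)
    (hmin : ∀ (x' : N → NodeVars N G S T) (y' : TSOVars N L T),
      (∀ n, NodeFeasible M n (x' n)) → TSOFeasible M y' →
      Lagr M lb lg lp lc x y ≤ Lagr M lb lg lp lc x' y') :
    (∀ n (x' : NodeVars N G S T), NodeFeasible M n x' →
      NodeCost M n (fun a b t => lb a b t + lb b a t) lg lp lc (x n)
        ≤ NodeCost M n (fun a b t => lb a b t + lb b a t) lg lp lc x') ∧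
    (∀ y' : TSOVars N L T, TSOFeasible M y' →
      TSOCost M lg lp y ≤ TSOCost M lg lp y') ∧
    (Clearing M x y ∧
      (∀ (lb' lg' : N → N → T → ℝ) (lp' : N → T → ℝ),
        (∑ t, ∑ n, ∑ m ∈ M.omega n, lb' n m t * ((x n).pb m t + (x m).pb n t))
          + (∑ t, ∑ n, ∑ m ∈ M.omega n, lg' n m t * ((x n).pb m t - y.zb n m t))
          + (∑ t, ∑ n, lp' n t * ((x n).pp t - y.zp n t)) = 0) ∧
      (∀ lc' : ℝ, lc' * ((∑ n, (x n).e) - M.CAP) = 0)) := by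
  have heq : IsMarketEquilibrium M (fun n => {x | NodeFeasible M n x}) {y | TSOFeasible M y}
      (symmetricPrice lb) lg lp lc x y :=
    lagrangian_minimizer_is_market_equilibrium_general hsym (fun n _ => hxfeas n) hyfeas hclear
      fun z hz => hmin z.1 z.2 (fun n => hz.1 n (Set.mem_univ n)) hz.2
  exact ⟨fun n _ hx' => heq.isMinOn_nodeCost n hx', fun _ hy' => heq.isMinOn_tsoCost hy',
    heq.clearing, heq.clearing.marketOperator_objective_eq_zero,
    heq.clearing.carbonOperator_objective_eq_zero⟩
end

section
/- Consider the paper's full mixed-market model (see context). Let prices λ̃^{bilateral}_{n,m,t}, λ^{grid}_{n,m,t}, λ^{pool}_{n,t}, λ^{CO2} ∈ ℝ be given with symmetric bilateral prices λ̃^{bilateral}_{n,m,t} = λ̃^{bilateral}_{m,n,t}, and let a primal point (node variables for each n, TSO variables) be a long-term market equilibrium at these prices, i.e.: (i) for every node n its variables minimize node n's total cost F_n + Σ_{t,m∈ω_n}(λ̃^{bilateral}_{n,m,t} + λ^{grid}_{n,m,t}) p^{bilateral}_{n,m,t} + Σ_t λ^{pool}_{n,t} p^{pool}_{n,t} + λ^{CO2}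 e^{CO2}_n over X_n; (ii) the TSO variables minimize F_{TSO} − Σ_{t,n}(Σ_{m∈ω_n} λ^{grid}_{n,m,t} z^{bilateral}_{n,m,t} + λ^{pool}_{n,t} z^{pool}_{n,t}) over Y; and (iii) the clearing constraints hold (p^{bilateral}_{n,m,t} = −p^{bilateral}_{m,n,t}, p^{bilateral}_{n,m,t} = z^{bilateral}_{n,m,t}, p^{pool}_{n,t} = z^{pool}_{n,t}, Σ_n e^{CO2}_n = CAP). Then the combined primal point is an optimal solution of the centralized problem (5): it is feasible and minimizes Σ_n F_n + F_{TSO} over all points in ∏_n X_n × Y satisfying the clearing constraints. -/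
variable {N G S L T : Type*} [Fintype N] [Fintype G] [Fintype S] [Fintype L] [Fintype T]

section Optimization

variable {α β ι γ : Type*}

lemma isMinOn_add_prod [Add γ] [Preorder γ] [AddLeftMono γ] [AddRightMono γ]
    {f : α → γ} {g : β → γ} {s : Set α} {t : Set β} {a : α} {b : β}
    (hf : IsMinOn f s a) (hg : IsMinOn g t b) :
    IsMinOn (fun z : α × β => f z.1 + g z.2) (s ×ˢ t) (a, b) :=
  fun _ hz => add_le_add (hf hz.1) (hg hz.2)

lemma isMinOn_sum_pi {κ : ι → Type*} [Fintype ι] [AddCommMonoid γ] [Preorder γ] [AddLeftMono γ]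
    {f : ∀ i, κ i → γ} {s : ∀ i, Set (κ i)} {a : ∀ i, κ i}
    (hf : ∀ i, IsMinOn (f i) (s i) (a i)) :
    IsMinOn (fun z : ∀ i, κ i => ∑ i, f i (z i)) (Set.univ.pi s) a :=
  fun _ hz => Finset.sum_le_sum fun i _ => hf i (hz i (Set.mem_univ i))

/-- Everett's form of Lagrangian sufficiency, with `p` the priced constraint violation. -/
lemma isMinOn_inter_of_isMinOn_add [Add γ] [Preorder γ] [AddRightReflectLE γ]
    {f p : α → γ} {s t : Set α} {a : α} {c : γ}
    (hmin : IsMinOn (fun z => f z + p z) s a) (ha : a ∈ t) (hp : ∀ z ∈ t, p z = c) :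
    IsMinOn f (s ∩ t) a := by
  intro z hz
  have hle : f a + p a ≤ f z + p z := hmin hz.1
  rw [hp a ha, hp z hz.2] at hle
  exact le_of_add_le_add_right hle

end Optimization

section NeighborSums

variable {ι A : Type*} [Fintype ι] {ω : ι → Finset ι}

lemma sum_neighbors_eq_zero_of_antisymm [AddCommGroup A] [IsAddTorsionFree A]
    (hω : ∀ i j, j ∈ ω i ↔ i ∈ ω j) {a : ι → ι → A}
    (ha : ∀ i, ∀ j ∈ ω i, a i j = -a j i) :
    ∑ i, ∑ j ∈ ω i, a i j = 0 := by
  refine self_eq_neg.mp ?_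
  calc
    ∑ i, ∑ j ∈ ω i, a i j = ∑ i, ∑ j ∈ ω i, -a j i :=
      Finset.sum_congr rfl fun i _ => Finset.sum_congr rfl (ha i)
    _ = -∑ i, ∑ j ∈ ω i, a j i := by simp only [Finset.sum_neg_distrib]
    _ = -∑ j, ∑ i ∈ ω j, a j i := congr_arg _ (Finset.sum_comm' (by simpa using hω))

lemma sum_neighbors_symm_add_mul_antisymm [NonUnitalNonAssocRing A] [IsAddTorsionFree A]
    (hω : ∀ i j, j ∈ ω i ↔ i ∈ ω j) {s a : ι → ι → A} (b : ι → ι → A)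
    (hs : ∀ i, ∀ j ∈ ω i, s i j = s j i) (ha : ∀ i, ∀ j ∈ ω i, a i j = -a j i) :
    ∑ i, ∑ j ∈ ω i, (s i j + b i j) * a i j = ∑ i, ∑ j ∈ ω i, b i j * a i j := by
  have hcancel : ∑ i, ∑ j ∈ ω i, s i j * a i j = 0 :=
    sum_neighbors_eq_zero_of_antisymm hω fun i j hj => by rw [hs i j hj, ha i j hj, mul_neg]
  simp only [add_mul, Finset.sum_add_distrib, hcancel, zero_add]

end NeighborSums

/-- Node `n`'s payments at given prices: the part of `NodeCost` added to its own cost `F_n`. -/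
def nodePayment (M : MarketData N G S L T) (n : N) (ltil lg : N → N → T → ℝ)
    (lp : N → T → ℝ) (lc : ℝ) (x : NodeVars N G S T) : ℝ :=
  (∑ t, ∑ m ∈ M.omega n, (ltil n m t + lg n m t) * x.pb m t)
  + (∑ t, lp n t * x.pp t) + lc * x.e

/-- The TSO's congestion revenue: the part of `TSOCost` subtracted from its own cost `F_TSO`. -/
def congestionRevenue (M : MarketData N G S L T) (lg : N → N → T → ℝ) (lp : N → T → ℝ)
    (y : TSOVars N L T) : ℝ :=
  ∑ t, ∑ n, ((∑ m ∈ M.omega n, lg n m t * y.zb n m t) + lp n t * y.zp n t)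

omit [Fintype N] [Fintype L] in
lemma nodeCost_eq_fnode_add_nodePayment (M : MarketData N G S L T) (n : N)
    (ltil lg : N → N → T → ℝ) (lp : N → T → ℝ) (lc : ℝ) (x : NodeVars N G S T) :
    NodeCost M n ltil lg lp lc x = Fnode M n x + nodePayment M n ltil lg lp lc x := by
  simp only [NodeCost, nodePayment, add_assoc]

omit [Fintype G] [Fintype S] [Fintype L] in
lemma sum_nodePayment_sub_congestionRevenue (M : MarketData N G S L T)
    (hsym : ∀ n m, m ∈ M.omega n ↔ n ∈ M.omega m) {ltil : N → N → T → ℝ}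
    (hltil : ∀ n, ∀ m ∈ M.omega n, ∀ t, ltil n m t = ltil m n t)
    (lg : N → N → T → ℝ) (lp : N → T → ℝ) (lc : ℝ)
    {x : N → NodeVars N G S T} {y : TSOVars N L T} (hclear : Clearing M x y) :
    ∑ n, nodePayment M n ltil lg lp lc (x n) - congestionRevenue M lg lp y = lc * M.CAP := by
  obtain ⟨hrec, hzb, hzp, hcap⟩ := hclear
  have hbilateral : ∑ n, ∑ t, ∑ m ∈ M.omega n, (ltil n m t + lg n m t) * (x n).pb m t
      = ∑ t, ∑ n, ∑ m ∈ M.omega n, lg n m t * y.zb n m t := by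
    rw [Finset.sum_comm]
    refine Finset.sum_congr rfl fun t _ => ?_
    rw [sum_neighbors_symm_add_mul_antisymm hsym (lg · · t) (fun n m hm => hltil n m hm t)
      fun n m hm => hrec n m hm t]
    exact Finset.sum_congr rfl fun n _ => Finset.sum_congr rfl fun m hm => by rw [hzb n m hm t]
  have hpool : ∑ n, ∑ t, lp n t * (x n).pp t = ∑ t, ∑ n, lp n t * y.zp n t := by
    rw [Finset.sum_comm]
    simp only [hzp]
  have hcarbon : ∑ n, lc * (x n).e = lc * M.CAP := by rw [← Finset.mul_sum, hcap]
  simp only [nodePayment, congestionRevenue, Finset.sum_add_distrib]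
  rw [hbilateral, hpool, hcarbon, add_sub_cancel_left]

omit [Fintype G] [Fintype S] [Fintype L] in
theorem market_equilibrium_is_centrally_optimal_general (M : MarketData N G S L T)
    (hsym : ∀ n m, m ∈ M.omega n ↔ n ∈ M.omega m) {ltil lg : N → N → T → ℝ}
    {lp : N → T → ℝ} {lc : ℝ} (hltil : ∀ n, ∀ m ∈ M.omega n, ∀ t, ltil n m t = ltil m n t)
    {F : N → NodeVars N G S T → ℝ} {H : TSOVars N L T → ℝ}
    {X : N → Set (NodeVars N G S T)} {Y : Set (TSOVars N L T)}
    {x : N → NodeVars N G S T} {y : TSOVars N L T} (hclear : Clearing M x y)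
    (hnode : ∀ n, IsMinOn (fun z => F n z + nodePayment M n ltil lg lp lc z) (X n) (x n))
    (htso : IsMinOn (fun z => H z - congestionRevenue M lg lp z) Y y) :
    IsMinOn (fun z : (N → NodeVars N G S T) × TSOVars N L T => ∑ n, F n (z.1 n) + H z.2)
      ((Set.univ.pi X ×ˢ Y) ∩ {z | Clearing M z.1 z.2}) (x, y) := by
  have hjoint : IsMinOn
      (fun z : (N → NodeVars N G S T) × TSOVars N L T => (∑ n, F n (z.1 n) + H z.2)
        + (∑ n, nodePayment M n ltil lg lp lc (z.1 n) - congestionRevenue M lg lp z.2))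
      (Set.univ.pi X ×ˢ Y) (x, y) := by
    convert isMinOn_add_prod (isMinOn_sum_pi hnode) htso using 2 with z
    rw [Finset.sum_add_distrib]
    ring
  exact isMinOn_inter_of_isMinOn_add hjoint hclear fun _ hz =>
    sum_nodePayment_sub_congestionRevenue M hsym hltil lg lp lc hz

/-- **A long-term market equilibrium solves the centralized problem (5).**
Given symmetric bilateral prices `ltil`, grid prices `lg`, pool prices `lp` and a carbon
price `lc`, suppose the primal point (node variables `x`, TSO variables `y`) is a
long-term market equilibrium: each node's variables minimize its total cost (own cost plus
trading payments) over its feasible set `X_n`, the TSO's variables minimize its cost minus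
congestion revenue over `Y`, and all market-clearing constraints hold. Then the combined
primal point is an optimal solution of the centralized problem: it is feasible and
minimizes the total cost `∑ n, F_n + F_TSO` over all points of `∏ n, X_n × Y` satisfying
the clearing constraints. -/
theorem market_equilibrium_is_centrally_optimal
    (M : MarketData N G S L T)
    (hsym : ∀ n m, m ∈ M.omega n ↔ n ∈ M.omega m) (hirr : ∀ n, n ∉ M.omega n)
    (hEbil : ∀ n m, 0 ≤ M.Ebil n m) (hEav : ∀ i n t, 0 ≤ M.Eav i n t)
    (hK : ∀ i n, 0 ≤ M.K i n) (hKSc : ∀ i n, 0 ≤ M.KSc i n)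
    (hKstor : ∀ i n, 0 ≤ M.Kstor i n) (hKl : ∀ l, 0 ≤ M.Kl l)
    (hHin : ∀ i, 0 < M.Hin i) (hHout : ∀ i, 0 < M.Hout i) (hW : ∀ i, 0 ≤ M.W i)
    (hPhi : ∀ n, 0 ≤ M.Phi n ∧ M.Phi n ≤ 1)
    (ltil lg : N → N → T → ℝ) (lp : N → T → ℝ) (lc : ℝ)
    (hltil : ∀ n m t, ltil n m t = ltil m n t)
    (x : N → NodeVars N G S T) (y : TSOVars N L T)
    (hxfeas : ∀ n, NodeFeasible M n (x n)) (hyfeas : TSOFeasible M y)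
    (hclear : Clearing M x y)
    (hnode : ∀ n (x' : NodeVars N G S T), NodeFeasible M n x' →
      NodeCost M n ltil lg lp lc (x n) ≤ NodeCost M n ltil lg lp lc x')
    (htso : ∀ y' : TSOVars N L T, TSOFeasible M y' →
      TSOCost M lg lp y ≤ TSOCost M lg lp y') :
    ((∀ n, NodeFeasible M n (x n)) ∧ TSOFeasible M y ∧ Clearing M x y) ∧
    (∀ (x' : N → NodeVars N G S T) (y' : TSOVars N L T),
      (∀ n, NodeFeasible M n (x' n)) → TSOFeasible M y' → Clearing M x' y' →
      (∑ n, Fnode M n (x n)) + Ftso M y ≤ (∑ n, Fnode M n (x' n)) + Ftso M y') := by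
  refine ⟨⟨hxfeas, hyfeas, hclear⟩, fun x' y' hx' hy' hclear' => ?_⟩
  simp only [nodeCost_eq_fnode_add_nodePayment] at hnode
  exact market_equilibrium_is_centrally_optimal_general M hsym (fun n m _ => hltil n m) hclear
    hnode htso (a := (x', y')) ⟨⟨fun n _ => hx' n, hy'⟩, hclear'⟩
end
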